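/- Let ε ∈ (0,1), set r = (1−ε)/2, and let E_ε = { Σ_{n=1}^∞ ω_n·((1+ε)/2)·r^{n−1} : ω ∈ {0,1}^ℕ } ⊂ [0,1] be the middle-ε Cantor set. If 0 < α < 1 and α > 1 − log 2 / log(2/(1−ε)), then E_ε has positive α-Riesz capacity: there exists a Borel probability measure μ on ℝ with μ(E_ε) = 1 and finite α-Riesz energy, ∫∫ |x−y|^{α−1} dμ(x) dμ(y) < ∞. -/

import Mathlib

open Filter Topology MeasureTheory

noncomputable section

/-- The middle-`ε` Cantor set on `[0,1]`: the set of sums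
`Σ_{n≥1} ω_n ((1+ε)/2) r^{n-1}` with `r = (1-ε)/2` and `ω ∈ {0,1}^ℕ`. -/
def cantorMidSet (ε : ℝ) : Set ℝ :=
  {x | ∃ ω : ℕ → Bool,
    x = ∑' n : ℕ, (if ω n then ((1 + ε) / 2) * ((1 - ε) / 2) ^ n else 0)}

/-!
Code the Cantor set by coin tosses `ω : ℕ → Bool` and push the fair coin-tossing measure forward.
Two codes that first differ at place `n` are sent to points at distance at least `ε r ^ n`, and the
codes agreeing with a given one up to place `n` have mass `2⁻ⁿ`. Hence the potential of the image
measure is bounded at every point of the set by the geometric series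
`∑ (ε r ^ n) ^ (α - 1) 2⁻ⁿ`, whose ratio `r ^ (α - 1) / 2` is less than one exactly when
`α > 1 - log 2 / log (1 / r)`.
-/

open Cardinal (cantorFunction cantorFunction_succ cantorFunctionAux)
open PiNat (firstDiff)
open scoped ENNReal

section SequenceSpace

variable {E : ℕ → Type*} [∀ n, MeasurableSpace (E n)]

lemma measurableSet_cylinder [∀ n, MeasurableSingletonClass (E n)] (x : ∀ n, E n) (n : ℕ) :
    MeasurableSet (PiNat.cylinder x n) := by
  rw [PiNat.cylinder_eq_pi]
  exact .pi (Set.to_countable _) fun i _ ↦ measurableSet_singleton (x i)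

lemma lintegral_comp_firstDiff_le [∀ n, MeasurableSingletonClass (E n)]
    (P : Measure (∀ n, E n)) (w : ℕ → ℝ≥0∞) (x : ∀ n, E n) :
    ∫⁻ y, w (firstDiff x y) ∂P ≤ ∑' n, w n * P (PiNat.cylinder x n) := by
  have pointwise (y : ∀ n, E n) :
      w (firstDiff x y) ≤ ∑' n, (PiNat.cylinder x n).indicator (fun _ ↦ w n) y := by
    refine le_trans ?_ (ENNReal.le_tsum (firstDiff x y))
    rw [Set.indicator_of_mem]
    exact (PiNat.mem_cylinder_comm x y _).2 (PiNat.mem_cylinder_firstDiff x y)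
  calc ∫⁻ y, w (firstDiff x y) ∂P
    _ ≤ ∫⁻ y, ∑' n, (PiNat.cylinder x n).indicator (fun _ ↦ w n) y ∂P := lintegral_mono pointwise
    _ = ∑' n, ∫⁻ y, (PiNat.cylinder x n).indicator (fun _ ↦ w n) y ∂P :=
      lintegral_tsum fun n ↦
        (measurable_const.indicator (measurableSet_cylinder x n)).aemeasurable
    _ = ∑' n, w n * P (PiNat.cylinder x n) := by
      simp only [lintegral_indicator_const (measurableSet_cylinder x _)]

lemma nullSingletonClass_of_measure_cylinder_le {P : Measure (∀ n, E n)} {p : ℝ≥0∞} (hp : p < 1)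
    (hP : ∀ x n, P (PiNat.cylinder x n) ≤ p ^ n) : NullSingletonClass P where
  measure_singleton x := by
    have singleton_le (n : ℕ) : P {x} ≤ p ^ n :=
      (measure_mono (Set.singleton_subset_iff.2 (PiNat.self_mem_cylinder x n))).trans (hP x n)
    exact nonpos_iff_eq_zero.1
      (ge_of_tendsto' (ENNReal.tendsto_pow_atTop_nhds_zero_of_lt_one hp) singleton_le)

lemma infinitePi_cylinder [∀ n, MeasurableSingletonClass (E n)] (ν : ∀ n, Measure (E n))
    [∀ n, IsProbabilityMeasure (ν n)] (x : ∀ n, E n) (n : ℕ) :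
    Measure.infinitePi ν (PiNat.cylinder x n) = ∏ i ∈ Finset.range n, ν i {x i} := by
  rw [PiNat.cylinder_eq_pi, Measure.infinitePi_pi ν fun i _ ↦ measurableSet_singleton (x i)]

end SequenceSpace

section Energy

variable {X : Type*} [PseudoEMetricSpace X] [MeasurableSpace X]

/-- The `α`-Riesz energy of `μ`, with kernel `t ^ (α - 1)`. For `α < 1` the kernel is `∞` at `0`,
so that atoms of `μ` contribute infinite energy. -/
def rieszEnergy (α : ℝ) (μ : Measure X) : ℝ≥0∞ :=
  ∫⁻ x, ∫⁻ y, edist x y ^ (α - 1) ∂μ ∂μ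

lemma rieszEnergy_map_le {Ω : Type*} [MeasurableSpace Ω] (α : ℝ) (P : Measure Ω) (f : Ω → X) :
    rieszEnergy α (P.map f) ≤ ∫⁻ ω, ∫⁻ η, edist (f ω) (f η) ^ (α - 1) ∂P ∂P :=
  (lintegral_map_le _ f).trans (lintegral_mono fun _ ↦ lintegral_map_le _ f)

lemma ennreal_rpow_le_rpow_of_nonpos {s t : ℝ≥0∞} {z : ℝ} (hst : s ≤ t) (hz : z ≤ 0) :
    t ^ z ≤ s ^ z := by
  rw [← neg_neg z, ENNReal.rpow_neg t, ENNReal.rpow_neg s]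
  exact ENNReal.inv_le_inv.2 (ENNReal.rpow_le_rpow hst (neg_nonneg.2 hz))

lemma tsum_mul_pow_rpow_mul_pow {a r : ℝ≥0∞} (ha : a ≠ ⊤) (hr : r ≠ ⊤) (p : ℝ≥0∞) (z : ℝ) :
    ∑' n : ℕ, (a * r ^ n) ^ z * p ^ n = a ^ z * (1 - r ^ z * p)⁻¹ := by
  have term_eq (n : ℕ) : (a * r ^ n) ^ z * p ^ n = a ^ z * (r ^ z * p) ^ n := by
    rw [ENNReal.mul_rpow_of_ne_top ha (ENNReal.pow_ne_top hr), mul_pow, mul_assoc,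
      ← ENNReal.rpow_natCast r, ← ENNReal.rpow_natCast (r ^ z), ← ENNReal.rpow_mul,
      ← ENNReal.rpow_mul, mul_comm z]
  simp_rw [term_eq]
  rw [ENNReal.tsum_mul_left, ENNReal.tsum_geometric]

theorem rieszEnergy_map_le_of_separated {E : ℕ → Type*} [∀ n, MeasurableSpace (E n)]
    [∀ n, MeasurableSingletonClass (E n)] {P : Measure (∀ n, E n)} [NullSingletonClass P]
    {f : (∀ n, E n) → X} {a r p : ℝ≥0∞} {α : ℝ} (hα : α ≤ 1) (ha : a ≠ ⊤) (hr : r ≠ ⊤)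
    (hP : ∀ ω n, P (PiNat.cylinder ω n) ≤ p ^ n)
    (hf : ∀ ω η, ω ≠ η → a * r ^ firstDiff ω η ≤ edist (f ω) (f η)) :
    rieszEnergy α (P.map f) ≤ a ^ (α - 1) * (1 - r ^ (α - 1) * p)⁻¹ * P Set.univ := by
  have potential_le (ω : ∀ n, E n) : ∫⁻ η, edist (f ω) (f η) ^ (α - 1) ∂P
      ≤ a ^ (α - 1) * (1 - r ^ (α - 1) * p)⁻¹ := by
    have kernel_le : ∀ᵐ η ∂P,
        edist (f ω) (f η) ^ (α - 1) ≤ (a * r ^ firstDiff ω η) ^ (α - 1) := by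
      filter_upwards [Measure.ae_ne P ω] with η hη
      exact ennreal_rpow_le_rpow_of_nonpos (hf ω η hη.symm) (sub_nonpos.2 hα)
    calc ∫⁻ η, edist (f ω) (f η) ^ (α - 1) ∂P
      _ ≤ ∫⁻ η, (a * r ^ firstDiff ω η) ^ (α - 1) ∂P := lintegral_mono_ae kernel_le
      _ ≤ ∑' n, (a * r ^ n) ^ (α - 1) * P (PiNat.cylinder ω n) :=
        lintegral_comp_firstDiff_le P (fun n ↦ (a * r ^ n) ^ (α - 1)) ω
      _ ≤ ∑' n, (a * r ^ n) ^ (α - 1) * p ^ n := by gcongr; exact hP ω _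
      _ = a ^ (α - 1) * (1 - r ^ (α - 1) * p)⁻¹ := tsum_mul_pow_rpow_mul_pow ha hr p _
  calc rieszEnergy α (P.map f)
    _ ≤ ∫⁻ ω, ∫⁻ η, edist (f ω) (f η) ^ (α - 1) ∂P ∂P := rieszEnergy_map_le α P f
    _ ≤ ∫⁻ _, a ^ (α - 1) * (1 - r ^ (α - 1) * p)⁻¹ ∂P := lintegral_mono potential_le
    _ = a ^ (α - 1) * (1 - r ^ (α - 1) * p)⁻¹ * P Set.univ := lintegral_const _

end Energy

section CoinTossing

/-- The law of a sequence of independent fair coin tosses. -/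
def coinTossing : Measure (ℕ → Bool) :=
  Measure.infinitePi fun _ ↦ (PMF.uniformOfFintype Bool).toMeasure

instance : IsProbabilityMeasure coinTossing := by
  unfold coinTossing
  infer_instance

lemma coinTossing_cylinder (ω : ℕ → Bool) (n : ℕ) : coinTossing (PiNat.cylinder ω n) = 2⁻¹ ^ n := by
  simp [coinTossing, infinitePi_cylinder]

instance : NullSingletonClass coinTossing :=
  nullSingletonClass_of_measure_cylinder_le ENNReal.one_half_lt_one
    fun ω n ↦ (coinTossing_cylinder ω n).le

end CoinTossing

section CantorFunction

variable {c : ℝ}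

lemma cantorFunction_nonneg (hc₀ : 0 ≤ c) (f : ℕ → Bool) : 0 ≤ cantorFunction c f :=
  tsum_nonneg fun _ ↦ Cardinal.cantorFunctionAux_nonneg hc₀

lemma cantorFunctionAux_le_pow (hc₀ : 0 ≤ c) (f : ℕ → Bool) (n : ℕ) :
    cantorFunctionAux c f n ≤ c ^ n := by
  cases h : f n <;> simp [h, pow_nonneg hc₀]

lemma cantorFunction_le_inv_one_sub (hc₀ : 0 ≤ c) (hc₁ : c < 1) (f : ℕ → Bool) :
    cantorFunction c f ≤ (1 - c)⁻¹ := by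
  rw [← tsum_geometric_of_lt_one hc₀ hc₁]
  exact (Cardinal.summable_cantor_function f hc₀ hc₁).tsum_le_tsum
    (cantorFunctionAux_le_pow hc₀ f) (summable_geometric_of_lt_one hc₀ hc₁)

lemma continuous_cantorFunction (hc₀ : 0 ≤ c) (hc₁ : c < 1) : Continuous (cantorFunction c) := by
  refine continuous_tsum (fun n ↦ ?_) (summable_geometric_of_lt_one hc₀ hc₁) fun n f ↦ ?_
  · exact (continuous_of_discreteTopology (f := fun b ↦ cond b (c ^ n) 0)).comp
      (continuous_apply n)
  · rw [Real.norm_of_nonneg (Cardinal.cantorFunctionAux_nonneg hc₀)]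
    exact cantorFunctionAux_le_pow hc₀ f n

lemma gap_le_cantorFunction_sub (hc₀ : 0 ≤ c) (hc₁ : c < 1) {f g : ℕ → Bool}
    (hf : f 0 = true) (hg : g 0 = false) :
    (1 - 2 * c) / (1 - c) ≤ cantorFunction c f - cantorFunction c g := by
  rw [cantorFunction_succ f hc₀ hc₁, cantorFunction_succ g hc₀ hc₁, hf, hg, cond_true, cond_false]
  have tail_f := mul_nonneg hc₀ (cantorFunction_nonneg hc₀ fun n ↦ f (n + 1))
  have tail_g := mul_le_mul_of_nonneg_left
    (cantorFunction_le_inv_one_sub hc₀ hc₁ fun n ↦ g (n + 1)) hc₀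
  have gap_eq : (1 - 2 * c) / (1 - c) = 1 - c * (1 - c)⁻¹ := by
    field_simp [(sub_pos.2 hc₁).ne']
    ring
  linarith

lemma gap_mul_pow_le_abs_cantorFunction_sub (hc₀ : 0 ≤ c) (hc₁ : c < 1) {n : ℕ} {f g : ℕ → Bool}
    (agree : ∀ i < n, f i = g i) (differ : f n ≠ g n) :
    (1 - 2 * c) / (1 - c) * c ^ n ≤ |cantorFunction c f - cantorFunction c g| := by
  induction n generalizing f g with
  | zero =>
    rw [pow_zero, mul_one]
    cases hf : f 0
    · have hg : g 0 = true := by simpa [hf] using differ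
      rw [abs_sub_comm]
      exact (gap_le_cantorFunction_sub hc₀ hc₁ hg hf).trans (le_abs_self _)
    · have hg : g 0 = false := by simpa [hf] using differ
      exact (gap_le_cantorFunction_sub hc₀ hc₁ hf hg).trans (le_abs_self _)
  | succ n ih =>
    have tails := ih (f := fun n ↦ f (n + 1)) (g := fun n ↦ g (n + 1))
      (fun i hi ↦ agree (i + 1) (by lia)) differ
    rw [cantorFunction_succ f hc₀ hc₁, cantorFunction_succ g hc₀ hc₁, agree 0 n.succ_pos,
      add_sub_add_left_eq_sub, ← mul_sub, abs_mul, abs_of_nonneg hc₀, pow_succ', mul_left_comm]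
    exact mul_le_mul_of_nonneg_left tails hc₀

end CantorFunction

section MiddleCantorSet

variable {ε : ℝ}

/-- The coding of the middle-`ε` Cantor set by binary sequences; the digit `1` at place `n` selects
the right-hand interval at stage `n + 1`. -/
def cantorMidCoding (ε : ℝ) (ω : ℕ → Bool) : ℝ :=
  (1 + ε) / 2 * cantorFunction ((1 - ε) / 2) ω

lemma cantorMidSet_eq_range (ε : ℝ) : cantorMidSet ε = Set.range (cantorMidCoding ε) := by
  ext x
  simp only [cantorMidSet, cantorMidCoding, cantorFunction, cantorFunctionAux, ← tsum_mul_left,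
    Bool.cond_eq_ite, mul_ite, mul_zero, Set.mem_ofPred_eq, Set.mem_range, eq_comm]

lemma continuous_cantorMidCoding (hε₀ : 0 < ε) (hε₁ : ε < 1) : Continuous (cantorMidCoding ε) :=
  continuous_const.mul (continuous_cantorFunction (by linarith) (by linarith))

lemma mul_pow_firstDiff_le_edist_cantorMidCoding (hε₀ : 0 < ε) (hε₁ : ε < 1) {ω η : ℕ → Bool}
    (hne : ω ≠ η) :
    ENNReal.ofReal ε * ENNReal.ofReal ((1 - ε) / 2) ^ firstDiff ω η
      ≤ edist (cantorMidCoding ε ω) (cantorMidCoding ε η) := by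
  have hr : 0 ≤ (1 - ε) / 2 := by linarith
  have gap := gap_mul_pow_le_abs_cantorFunction_sub hr (by linarith)
    (fun i hi ↦ PiNat.apply_eq_of_lt_firstDiff hi) (PiNat.apply_firstDiff_ne hne)
  have scale : ε = (1 + ε) / 2 * ((1 - 2 * ((1 - ε) / 2)) / (1 - (1 - ε) / 2)) := by
    have : 1 - (1 - ε) / 2 = (1 + ε) / 2 := by ring
    rw [this]
    field_simp
    ring
  rw [← ENNReal.ofReal_pow hr, ← ENNReal.ofReal_mul hε₀.le, edist_dist, Real.dist_eq,
    cantorMidCoding, cantorMidCoding, ← mul_sub, abs_mul, abs_of_nonneg (by positivity)]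
  apply ENNReal.ofReal_le_ofReal
  nth_rw 1 [scale]
  rw [mul_assoc]
  gcongr

/-- The image of the coin-tossing measure under the coding, i.e. the natural self-similar
probability measure on the middle-`ε` Cantor set. -/
def cantorMidMeasure (ε : ℝ) : Measure ℝ := coinTossing.map (cantorMidCoding ε)

lemma isProbabilityMeasure_cantorMidMeasure (hε₀ : 0 < ε) (hε₁ : ε < 1) :
    IsProbabilityMeasure (cantorMidMeasure ε) :=
  Measure.isProbabilityMeasure_map (continuous_cantorMidCoding hε₀ hε₁).aemeasurable

lemma cantorMidMeasure_cantorMidSet (hε₀ : 0 < ε) (hε₁ : ε < 1) :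
    cantorMidMeasure ε (cantorMidSet ε) = 1 := by
  have hcont := continuous_cantorMidCoding hε₀ hε₁
  rw [cantorMidMeasure, cantorMidSet_eq_range,
    Measure.map_apply hcont.measurable (isCompact_range hcont).measurableSet,
    Set.preimage_range, measure_univ]

lemma rieszEnergy_cantorMidMeasure_lt_top {α : ℝ} (hε₀ : 0 < ε) (hε₁ : ε < 1) (hα : α ≤ 1)
    (hratio : ((1 - ε) / 2) ^ (α - 1) < 2) : rieszEnergy α (cantorMidMeasure ε) < ⊤ := by
  have hr : 0 < (1 - ε) / 2 := by linarith
  have ratio_lt_one : ENNReal.ofReal ((1 - ε) / 2) ^ (α - 1) * 2⁻¹ < 1 := by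
    rw [ENNReal.ofReal_rpow_of_pos hr, ← div_eq_mul_inv]
    refine ENNReal.div_lt_of_lt_mul ?_
    simpa using (ENNReal.ofReal_lt_ofReal_iff two_pos).2 hratio
  refine (rieszEnergy_map_le_of_separated hα ENNReal.ofReal_ne_top ENNReal.ofReal_ne_top
    (fun ω n ↦ (coinTossing_cylinder ω n).le)
    (fun ω η ↦ mul_pow_firstDiff_le_edist_cantorMidCoding hε₀ hε₁)).trans_lt ?_
  rw [measure_univ, mul_one, ENNReal.ofReal_rpow_of_pos hε₀]
  exact ENNReal.mul_lt_top ENNReal.ofReal_lt_top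
    (ENNReal.inv_lt_top.2 (tsub_pos_of_lt ratio_lt_one))

end MiddleCantorSet

lemma rpow_sub_one_lt_of_one_sub_log_div_log_inv_lt {r M α : ℝ} (hr₀ : 0 < r) (hr₁ : r < 1)
    (hM : 0 < M) (hα : 1 - Real.log M / Real.log r⁻¹ < α) : r ^ (α - 1) < M := by
  have hlog : 0 < Real.log r⁻¹ := Real.log_pos ((one_lt_inv₀ hr₀).2 hr₁)
  have : (1 - α) * Real.log r⁻¹ < Real.log M := (lt_div_iff₀ hlog).1 (by linarith)
  rw [← Real.log_lt_log_iff (Real.rpow_pos_of_pos hr₀ _) hM, Real.log_rpow hr₀]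
  rw [Real.log_inv] at this
  linarith

/-- If `0 < α < 1` and `α > 1 - log 2 / log(2/(1-ε))`, the middle-`ε` Cantor set has
positive `α`-Riesz capacity: it carries a Borel probability measure of finite
`α`-Riesz energy `∫∫ |x-y|^{α-1} dμ(x) dμ(y) < ∞`. -/
theorem cantor_positive_capacity (ε α : ℝ) (hε : 0 < ε) (hε1 : ε < 1)
    (hα0 : 0 < α) (hα1 : α < 1)
    (hdim : 1 - Real.log 2 / Real.log (2 / (1 - ε)) < α) :
    ∃ μ : Measure ℝ, IsProbabilityMeasure μ ∧ μ (cantorMidSet ε) = 1 ∧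
      (∫⁻ x, ∫⁻ y, (ENNReal.ofReal |x - y|) ^ (α - 1) ∂μ ∂μ) < ⊤ := by
  have hratio : ((1 - ε) / 2) ^ (α - 1) < 2 :=
    rpow_sub_one_lt_of_one_sub_log_div_log_inv_lt (by linarith) (by linarith) two_pos
      (by rwa [inv_div])
  refine ⟨cantorMidMeasure ε, isProbabilityMeasure_cantorMidMeasure hε hε1,
    cantorMidMeasure_cantorMidSet hε hε1, ?_⟩
  simpa only [rieszEnergy, edist_dist, Real.dist_eq] using
    rieszEnergy_cantorMidMeasure_lt_top hε hε1 hα1.le hratio
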